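/- Let M be a Fraïssé limit of the class of finite good colored orders. Let N be a good colored order, j : M → N an embedding, and t ∈ N with t ∉ j[M] and N = j[M] ∪ {t}. Then for every finite subset x ⊆ M there exists an automorphism α of M with α(v) = v for all v ∈ x such that there is no automorphism β of N satisfying β(t) = t and β ∘ j = j ∘ α. (In other words, M has no homogeneous one-point extensions.) -/

import Mathlib

/-!
Over a finite set `A ⊆ M`, the new point `t` has a good quantifier-free type, so the one-point
extension property realizes it inside `M` (`exists_realization`). Let `v` realize the type of `t`
over `x`, and let `w` realize the type of `t` over `x ∪ {v}`. Then `v` and `w` have the same type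
over `x`, so ultrahomogeneity gives an automorphism `α` of `M` that fixes `x` pointwise and sends
`v` to `w` (`exists_auto_of_same_type`). If `α` lifted to an automorphism of `N` fixing `t`, the
pairs `{t, v}` and `{t, w}` would have the same color. By the choice of `w`, the pair `{v, w}` also
has the color of `{v, t}`, so `t, v, w` would be a monochromatic triangle in `N`.
-/

/-- A colored order structure on a type `X`: a strict linear order `lt` together with a
symmetric coloring `c` of pairs of distinct elements by natural numbers. -/
structure ColOrd (X : Type) where
  lt : X → X → Prop
  c : X → X → ℕ
  lt_irrefl : ∀ a, ¬ lt a a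
  lt_trans : ∀ ⦃a b d⦄, lt a b → lt b d → lt a d
  lt_total : ∀ a b, a ≠ b → lt a b ∨ lt b a
  c_symm : ∀ a b, a ≠ b → c a b = c b a

/-- A colored order is *good* if it contains no monochromatic triangle. -/
def ColOrd.Good {X : Type} (S : ColOrd X) : Prop :=
  ¬ ∃ a b d : X, a ≠ b ∧ b ≠ d ∧ a ≠ d ∧ S.c a b = S.c b d ∧ S.c a b = S.c a d

/-- An embedding of colored orders: a strictly order-preserving injection which
preserves the colors of pairs of distinct elements. -/
def IsEmb {X Y : Type} (S : ColOrd X) (T : ColOrd Y) (f : X → Y) : Prop :=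
  Function.Injective f ∧
  (∀ a b, S.lt a b ↔ T.lt (f a) (f b)) ∧
  (∀ a b, a ≠ b → T.c (f a) (f b) = S.c a b)

/-- An automorphism is a surjective self-embedding. -/
def IsAuto {X : Type} (S : ColOrd X) (α : X → X) : Prop :=
  Function.Surjective α ∧ IsEmb S S α

/-- `B`, a colored order on `Option A` (where `some a` represents the point `a ∈ A` and
`none` represents a new point), extends the structure induced by `S` on `A ⊆ X`. -/
def ExtendsOn {X : Type} (S : ColOrd X) (A : Set X) (B : ColOrd (Option A)) : Prop :=
  (∀ a b : A, B.lt (some a) (some b) ↔ S.lt a b) ∧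
  (∀ a b : A, (a : X) ≠ (b : X) → B.c (some a) (some b) = S.c a b)

/-- The one-point extension property: every good one-point extension of (the structure
induced on) a finite subset `A` is realized by some `t ∉ A`, in the sense that the map
fixing `A` pointwise and sending the new point to `t` is an isomorphism onto `A ∪ {t}`. -/
def OnePointExtProp {X : Type} (S : ColOrd X) : Prop :=
  ∀ A : Set X, A.Finite → ∀ B : ColOrd (Option A), B.Good → ExtendsOn S A B →
    ∃ t : X, t ∉ A ∧
      (∀ a : A, (B.lt (some a) none ↔ S.lt a t) ∧ (B.lt none (some a) ↔ S.lt t a)) ∧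
      (∀ a : A, B.c (some a) none = S.c a t ∧ B.c none (some a) = S.c t a)

/-- Ultrahomogeneity: every isomorphism between finite subsets (with the induced
structure) extends to an automorphism. -/
def Ultrahomogeneous {X : Type} (S : ColOrd X) : Prop :=
  ∀ (A B : Set X), A.Finite → B.Finite → ∀ g : A → B, Function.Bijective g →
    (∀ a b : A, S.lt (g a : X) (g b : X) ↔ S.lt a b) →
    (∀ a b : A, (a : X) ≠ (b : X) → S.c (g a : X) (g b : X) = S.c a b) →
    ∃ α : X → X, IsAuto S α ∧ ∀ a : A, α a = g a

/-- A Fraïssé limit of the class of finite good colored orders: a countably infinite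
good colored order which is ultrahomogeneous and has the one-point extension property. -/
def IsFLim {X : Type} (S : ColOrd X) : Prop :=
  Countable X ∧ Infinite X ∧ S.Good ∧ Ultrahomogeneous S ∧ OnePointExtProp S

/-- The colored order induced along an injection. -/
def ColOrd.comap {X Y : Type} (T : ColOrd Y) (f : X → Y) (hf : Function.Injective f) :
    ColOrd X where
  lt a b := T.lt (f a) (f b)
  c a b := T.c (f a) (f b)
  lt_irrefl a := T.lt_irrefl (f a)
  lt_trans _ _ _ h₁ h₂ := T.lt_trans h₁ h₂
  lt_total _ _ h := T.lt_total _ _ (hf.ne h)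
  c_symm _ _ h := T.c_symm _ _ (hf.ne h)

theorem ColOrd.Good.comap {X Y : Type} {T : ColOrd Y} (hT : T.Good) (f : X → Y)
    (hf : Function.Injective f) : (T.comap f hf).Good := by
  rintro ⟨a, b, d, hab, hbd, had, h₁, h₂⟩
  exact hT ⟨f a, f b, f d, hf.ne hab, hf.ne hbd, hf.ne had, h₁, h₂⟩

/-- The type of an outside point `t` over a finite set `A` is realized in `M`: the one-point
extension property applies to the structure that `N` induces on `A ∪ {t}`. -/
theorem exists_realization {M N : Type} {S : ColOrd M} (hext : OnePointExtProp S)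
    {T : ColOrd N} (hT : T.Good) {j : M → N} (hj : IsEmb S T j)
    {t : N} (ht : t ∉ Set.range j) (A : Set M) (hA : A.Finite) :
    ∃ w, w ∉ A ∧ ∀ a ∈ A, (S.lt a w ↔ T.lt (j a) t) ∧ (S.lt w a ↔ T.lt t (j a)) ∧
      S.c a w = T.c (j a) t ∧ S.c w a = T.c t (j a) := by
  let f : Option A → N := fun o => o.elim t (fun a => j a)
  have hf : Function.Injective f := by
    rintro (_ | a) (_ | b) h
    · rfl
    · exact (ht ⟨b, h.symm⟩).elim
    · exact (ht ⟨a, h⟩).elim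
    · exact congrArg some (Subtype.ext (hj.1 h))
  obtain ⟨w, hw, hlt, hc⟩ := hext A hA (T.comap f hf) (hT.comap f hf)
    ⟨fun a b => (hj.2.1 a b).symm, fun a b h => hj.2.2 a b h⟩
  exact ⟨w, hw, fun a ha => ⟨(hlt ⟨a, ha⟩).1.symm, (hlt ⟨a, ha⟩).2.symm,
    (hc ⟨a, ha⟩).1.symm, (hc ⟨a, ha⟩).2.symm⟩⟩

/-- Two points outside a finite set `x` with the same type over `x` are conjugate by an
automorphism fixing `x` pointwise. -/
theorem exists_auto_of_same_type {M : Type} {S : ColOrd M} (hhom : Ultrahomogeneous S)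
    {x : Set M} (hx : x.Finite) {v w : M} (hv : v ∉ x) (hw : w ∉ x)
    (h : ∀ a ∈ x, (S.lt a w ↔ S.lt a v) ∧ (S.lt w a ↔ S.lt v a) ∧
      S.c a w = S.c a v ∧ S.c w a = S.c v a) :
    ∃ α : M → M, IsAuto S α ∧ (∀ a ∈ x, α a = a) ∧ α v = w := by
  classical
  have hne : ∀ a ∈ x, a ≠ v := fun a ha e => hv (e ▸ ha)
  have hne' : ∀ a ∈ x, a ≠ w := fun a ha e => hw (e ▸ ha)
  let φ : M → M := fun a => if a = v then w else a
  have φv : φ v = w := if_pos rfl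
  have φx : ∀ a ∈ x, φ a = a := fun a ha => if_neg (hne a ha)
  have hφ : ∀ a ∈ insert v x, φ a ∈ insert w x := by
    rintro a (rfl | ha)
    · rw [φv]; exact Set.mem_insert _ _
    · rw [φx a ha]; exact Set.mem_insert_of_mem _ ha
  have hext : ∃ α : M → M, IsAuto S α ∧ ∀ a : ↥(insert v x), α a = φ a := by
    refine hhom (insert v x) (insert w x) (hx.insert v) (hx.insert w)
      (fun a => ⟨φ a, hφ a a.2⟩) ?_ ?_ ?_
    · constructor
      · rintro ⟨a, rfl | ha⟩ ⟨b, rfl | hb⟩ hab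
        · rfl
        · have e := congrArg Subtype.val hab
          simp only [φv, φx b hb] at e
          exact (hne' b hb e.symm).elim
        · have e := congrArg Subtype.val hab
          simp only [φv, φx a ha] at e
          exact (hne' a ha e).elim
        · have e := congrArg Subtype.val hab
          simp only [φx a ha, φx b hb] at e
          exact Subtype.ext e
      · rintro ⟨b, rfl | hb⟩
        · exact ⟨⟨v, Set.mem_insert _ _⟩, Subtype.ext φv⟩
        · exact ⟨⟨b, Set.mem_insert_of_mem _ hb⟩, Subtype.ext (φx b hb)⟩
    · rintro ⟨a, rfl | ha⟩ ⟨b, rfl | hb⟩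
      · simp only [φv, S.lt_irrefl]
      · simp only [φv, φx b hb]; exact (h b hb).2.1
      · simp only [φv, φx a ha]; exact (h a ha).1
      · simp only [φx a ha, φx b hb]
    · rintro ⟨a, rfl | ha⟩ ⟨b, rfl | hb⟩ hab
      · exact (hab rfl).elim
      · simp only [φv, φx b hb]; exact (h b hb).2.2.2
      · simp only [φv, φx a ha]; exact (h a ha).2.2.1
      · simp only [φx a ha, φx b hb]
  obtain ⟨α, hα, hαφ⟩ := hext
  refine ⟨α, hα, fun a ha => ?_, ?_⟩
  · exact (hαφ ⟨a, Set.mem_insert_of_mem _ ha⟩).trans (φx a ha)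
  · exact (hαφ ⟨v, Set.mem_insert _ _⟩).trans φv

/-- A Fraïssé limit of the class of finite good colored orders has no
homogeneous one-point extensions: if `N` is a good colored order obtained from `M` by
adding a single new point `t` over the image of an embedding `j : M → N`, then for
every finite `x ⊆ M` some automorphism of `M` fixing `x` pointwise has no lift to an
automorphism of `N` fixing `t`. -/
theorem no_homogeneous_one_point_extension
    {M N : Type} (S : ColOrd M) (hS : IsFLim S)
    (T : ColOrd N) (hT : T.Good) (j : M → N) (hj : IsEmb S T j)
    (t : N) (ht : t ∉ Set.range j) (hN : ∀ y : N, y ∈ Set.range j ∨ y = t) :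
    ∀ x : Set M, x.Finite →
      ∃ α : M → M, IsAuto S α ∧ (∀ v ∈ x, α v = v) ∧
        ¬ ∃ β : N → N, IsAuto T β ∧ β t = t ∧ β ∘ j = j ∘ α := by
  intro x hx
  obtain ⟨-, -, -, hhom, hext⟩ := hS
  obtain ⟨v, hv, hvt⟩ := exists_realization hext hT hj ht x hx
  obtain ⟨w, hw, hwt⟩ := exists_realization hext hT hj ht (insert v x) (hx.insert v)
  have hwx : w ∉ x := fun h => hw (Set.mem_insert_of_mem _ h)
  have hvw : v ≠ w := fun e => hw (e ▸ Set.mem_insert _ _)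
  obtain ⟨α, hα, hαx, hαv⟩ := exists_auto_of_same_type hhom hx hv hwx (fun a ha => by
    obtain ⟨h₁, h₂, h₃, h₄⟩ := hwt a (Set.mem_insert_of_mem _ ha)
    obtain ⟨k₁, k₂, k₃, k₄⟩ := hvt a ha
    exact ⟨h₁.trans k₁.symm, h₂.trans k₂.symm, h₃.trans k₃.symm, h₄.trans k₄.symm⟩)
  refine ⟨α, hα, hαx, ?_⟩
  rintro ⟨β, hβ, hβt, hβj⟩
  have htj : ∀ a, t ≠ j a := fun a e => ht ⟨a, e.symm⟩
  have hβv : β (j v) = j w := (congrFun hβj v).trans (congrArg j hαv)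
  have htw : T.c t (j w) = T.c t (j v) := by
    have := hβ.2.2.2 t (j v) (htj v)
    rwa [hβt, hβv] at this
  have hvwc : T.c (j v) (j w) = T.c t (j v) := by
    rw [hj.2.2 v w hvw, (hwt v (Set.mem_insert _ _)).2.2.1, T.c_symm _ _ (htj v)]
  exact hT ⟨t, j v, j w, htj v, hj.1.ne hvw, htj w, hvwc.symm, htw.symm⟩
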